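/- arXiv:2007.08941 — 5 statements merged into one kernel-verified Lean document; each statement's English description precedes it below -/
import Mathlib

section
/- Assume the weighted graph is connected and fix x₀ ∈ V. Then the evaluation map from the kernel of Δ^{G,φ} to E given by f ↦ f(x₀) is injective; in particular, the dimension of the kernel of Δ^{G,φ} is at most dim E. -/
open scoped ComplexInnerProductSpace

/-!
Evaluation at `x₀` is linear, so it suffices that a section `f` in the kernel with `f x₀ = 0`
vanishes. Pairing `Δ f = 0` with `f` and symmetrising the double sum, using that each `φ x y` is
unitary with inverse `φ y x`, gives the Dirichlet energy identity
`∑ x, ∑ y, w x y * ‖f x - φ y x (f y)‖ ^ 2 = 0` (`norm_sq_sub_transport` is the termwise form).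
All terms are nonnegative, so `f` is parallel along every edge: `f x = φ y x (f y)`
whenever `0 < w x y` (`parallel_of_harmonic`). Unitary maps preserve norms, hence `‖f x‖` is
constant on the connected graph and equals `‖f x₀‖ = 0`.
-/

section

variable {V E : Type*} [NormedAddCommGroup E] [InnerProductSpace ℂ E]

/-- The energy of an edge is the sum of the contributions of its two endpoints to `⟪f, Δ f⟫`,
here for a single unitary map `U`. -/
lemma norm_sq_sub_transport (U : E ≃ₗᵢ[ℂ] E) (a b : E) :
    ‖a - U b‖ ^ 2 =
      (inner ℂ a (a - U b)).re + (inner ℂ b (b - U.symm a)).re := by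
  have h₁ : inner ℂ b (U.symm a) = inner ℂ (U b) a := by
    rw [← U.inner_map_map, U.apply_symm_apply]
  have h₂ : (inner ℂ (U b) a).re = (inner ℂ a (U b)).re := inner_re_symm (𝕜 := ℂ) _ _
  have h₃ : (inner ℂ a a).re = ‖a‖ ^ 2 := inner_self_eq_norm_sq (𝕜 := ℂ) a
  have h₄ : (inner ℂ b b).re = ‖b‖ ^ 2 := inner_self_eq_norm_sq (𝕜 := ℂ) b
  have h₅ : ‖a - U b‖ ^ 2 = ‖a‖ ^ 2 - 2 * (inner ℂ a (U b)).re + ‖U b‖ ^ 2 :=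
    norm_sub_sq (𝕜 := ℂ) a (U b)
  rw [h₅, U.norm_map, inner_sub_right, inner_sub_right, Complex.sub_re, Complex.sub_re, h₁, h₂,
    h₃, h₄]
  ring

/-- A section annihilated by the connection Laplacian is parallel along every edge, because its
Dirichlet energy vanishes. -/
lemma parallel_of_harmonic [Fintype V] (w : V → V → ℝ)
    (hw_symm : ∀ x y, w x y = w y x) (hw_nonneg : ∀ x y, 0 ≤ w x y)
    (φ : V → V → (E ≃ₗᵢ[ℂ] E)) (hφ : ∀ x y, φ y x = (φ x y).symm)
    (f : V → E) (hf : ∀ x, ∑ y, (w x y : ℂ) • (f x - φ y x (f y)) = 0)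
    {x y : V} (hxy : 0 < w x y) : f x = φ y x (f y) := by
  have hpair : ∀ x, ∑ y, w x y * (inner ℂ (f x) (f x - φ y x (f y))).re = 0 := by
    intro x
    have h := congrArg (fun v => (inner ℂ (f x) v).re) (hf x)
    simpa [inner_sum, inner_smul_right, inner_zero_right, Complex.re_sum,
      Complex.re_ofReal_mul] using h
  have henergy : ∑ x, ∑ y, w x y * ‖f x - φ y x (f y)‖ ^ 2 = 0 := by
    have hterm : ∀ x y, w x y * ‖f x - φ y x (f y)‖ ^ 2 =
        w x y * (inner ℂ (f x) (f x - φ y x (f y))).re +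
          w y x * (inner ℂ (f y) (f y - φ x y (f x))).re := by
      intro x y
      rw [norm_sq_sub_transport, ← hφ, hw_symm y x]
      ring
    simp_rw [hterm, Finset.sum_add_distrib]
    rw [Finset.sum_comm (f := fun x y => w y x * (inner ℂ (f y) (f y - φ x y (f x))).re)]
    simp_rw [hpair]
    simp
  have hnn : ∀ x y, 0 ≤ w x y * ‖f x - φ y x (f y)‖ ^ 2 :=
    fun x y => mul_nonneg (hw_nonneg x y) (sq_nonneg _)
  have hx := (Finset.sum_eq_zero_iff_of_nonneg
    (fun x _ => Finset.sum_nonneg fun y _ => hnn x y)).1 henergy x (Finset.mem_univ x)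
  have hy := (Finset.sum_eq_zero_iff_of_nonneg (fun y _ => hnn x y)).1 hx y (Finset.mem_univ y)
  have hzero : ‖f x - φ y x (f y)‖ = 0 := by
    simpa [hxy.ne'] using hy
  exact sub_eq_zero.1 (norm_eq_zero.1 hzero)

end

/-- If the weighted graph is connected, then for any fixed vertex `x₀`, the evaluation map
`f ↦ f x₀` from the kernel of the connection Laplacian `Δ^{G,φ}` to `E` is injective;
in particular `dim ker Δ^{G,φ} ≤ dim E`. -/
theorem connection_laplacian_kernel_evaluation_injective
    {V : Type*} [Fintype V] [Nonempty V]
    {E : Type*} [NormedAddCommGroup E] [InnerProductSpace ℂ E]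
    [FiniteDimensional ℂ E] [Nontrivial E]
    (w : V → V → ℝ)
    (hw_symm : ∀ x y, w x y = w y x)
    (hw_nonneg : ∀ x y, 0 ≤ w x y)
    (hw_diag : ∀ x, w x x = 0)
    (φ : V → V → (E ≃ₗᵢ[ℂ] E))
    (hφ : ∀ x y, φ y x = (φ x y).symm)
    (hconn : (SimpleGraph.fromRel (fun x y => 0 < w x y)).Connected)
    (Δ : (V → E) →ₗ[ℂ] (V → E))
    (hΔ : ∀ f x, Δ f x = ∑ y, (w x y : ℂ) • (f x - φ y x (f y)))
    (x₀ : V) :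
    Function.Injective (fun f : LinearMap.ker Δ => (f : V → E) x₀) ∧
      Module.finrank ℂ (LinearMap.ker Δ) ≤ Module.finrank ℂ E := by
  have hnorm : ∀ f ∈ LinearMap.ker Δ, ∀ x, ‖f x₀‖ = ‖f x‖ := by
    intro f hf x
    have hpar : ∀ {x y}, 0 < w x y → f x = φ y x (f y) := fun {_ _} h =>
      parallel_of_harmonic w hw_symm hw_nonneg φ hφ f
        (fun x => by rw [← hΔ, LinearMap.mem_ker.1 hf, Pi.zero_apply]) h
    obtain ⟨p⟩ := hconn.preconnected x₀ x
    induction p with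
    | nil => rfl
    | cons hadj _ ih =>
      rw [← ih]
      rcases ((SimpleGraph.fromRel_adj _ _ _).1 hadj).2 with h | h
      · rw [hpar h, LinearIsometryEquiv.norm_map]
      · rw [hpar h, LinearIsometryEquiv.norm_map]
  let ev : LinearMap.ker Δ →ₗ[ℂ] E := (LinearMap.proj x₀).comp (LinearMap.ker Δ).subtype
  have hinj : Function.Injective ev := by
    refine (injective_iff_map_eq_zero ev).2 fun f hf => Subtype.ext (funext fun x => ?_)
    have h₀ : (f : V → E) x₀ = 0 := hf
    have h := hnorm f f.2 x
    rw [h₀, norm_zero] at h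
    exact norm_eq_zero.1 h.symm
  exact ⟨hinj, LinearMap.finrank_le_finrank_of_injective hinj⟩
end

section
/- (Positive definiteness of the Dirichlet Laplacian.) Assume the weighted graph is connected and let D ⊆ V be a nonempty set of Dirichlet vertices. If a section f : V → E vanishes on D and satisfies (Δ^{G,φ} f)(x) = 0 for every x ∈ V \ D, then f is identically zero. -/
/-!
The proof is a maximum principle. At a vertex `x ∉ D` harmonicity says that
`∑ y, w x y • f x = ∑ y, w x y • φ y x (f y)`; since the transport maps are isometries, taking norms
gives `∑ y, w x y * (‖f x‖ - ‖f y‖) ≤ 0`. If `‖f‖` is maximal at `x`, every summand is nonnegative,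
so `‖f‖` takes the same value at each neighbour of `x` (`norm_eq_of_harmonic_of_isMax`).
A nonzero maximum is never attained on `D`, so by connectedness it spreads to all
of `V`, contradicting that `D` is nonempty.
-/

open scoped ComplexInnerProductSpace

/-- Local maximum principle: the norm of a section harmonic at `x`, if maximal there, is unchanged
across every edge of positive weight at `x`. -/
theorem norm_eq_of_harmonic_of_isMax
    {V : Type*} [Fintype V]
    {E : Type*} [NormedAddCommGroup E] [InnerProductSpace ℂ E]
    (w : V → V → ℝ) (hw_nonneg : ∀ x y, 0 ≤ w x y)
    (φ : V → V → (E ≃ₗᵢ[ℂ] E)) (f : V → E) (x : V)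
    (hmax : ∀ y, ‖f y‖ ≤ ‖f x‖)
    (hx : (∑ y, (w x y : ℂ) • (f x - φ y x (f y))) = 0)
    (y : V) (hy : 0 < w x y) : ‖f y‖ = ‖f x‖ := by
  have hsum : ((∑ z, w x z : ℝ) : ℂ) • f x = ∑ z, (w x z : ℂ) • φ z x (f z) := by
    simp only [smul_sub, Finset.sum_sub_distrib, ← Finset.sum_smul] at hx
    rw [Complex.ofReal_sum]
    exact sub_eq_zero.mp hx
  have hnorm : (∑ z, w x z) * ‖f x‖ ≤ ∑ z, w x z * ‖f z‖ := by
    calc (∑ z, w x z) * ‖f x‖ = ‖((∑ z, w x z : ℝ) : ℂ) • f x‖ := by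
          rw [norm_smul, Complex.norm_of_nonneg (Finset.sum_nonneg fun z _ => hw_nonneg x z)]
      _ ≤ ∑ z, ‖(w x z : ℂ) • φ z x (f z)‖ := by
          rw [hsum]
          exact norm_sum_le _ _
      _ = ∑ z, w x z * ‖f z‖ := by
          refine Finset.sum_congr rfl fun z _ => ?_
          rw [norm_smul, Complex.norm_of_nonneg (hw_nonneg x z), LinearIsometryEquiv.norm_map]
  have hterm : ∀ z ∈ Finset.univ, 0 ≤ w x z * (‖f x‖ - ‖f z‖) := fun z _ =>
    mul_nonneg (hw_nonneg x z) (sub_nonneg.mpr (hmax z))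
  have hzero : ∑ z, w x z * (‖f x‖ - ‖f z‖) = 0 := by
    refine le_antisymm ?_ (Finset.sum_nonneg hterm)
    simp only [mul_sub, Finset.sum_sub_distrib, ← Finset.sum_mul]
    linarith
  have hyz := (Finset.sum_eq_zero_iff_of_nonneg hterm).mp hzero y (Finset.mem_univ y)
  rcases mul_eq_zero.mp hyz with h | h
  · exact absurd h hy.ne'
  · linarith

/-- **Positive definiteness of the Dirichlet Laplacian.** If the weighted graph is connected
and `D ⊆ V` is a nonempty set of Dirichlet vertices, then any section `f : V → E` which
vanishes on `D` and satisfies `(Δ^{G,φ} f) x = 0` for every `x ∉ D` is identically zero. -/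
theorem dirichlet_connection_laplacian_injective
    {V : Type*} [Fintype V] [Nonempty V]
    {E : Type*} [NormedAddCommGroup E] [InnerProductSpace ℂ E]
    [FiniteDimensional ℂ E] [Nontrivial E]
    (w : V → V → ℝ)
    (hw_symm : ∀ x y, w x y = w y x)
    (hw_nonneg : ∀ x y, 0 ≤ w x y)
    (hw_diag : ∀ x, w x x = 0)
    (φ : V → V → (E ≃ₗᵢ[ℂ] E))
    (hφ : ∀ x y, φ y x = (φ x y).symm)
    (hconn : (SimpleGraph.fromRel (fun x y => 0 < w x y)).Connected)
    (D : Set V) (hD : D.Nonempty)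
    (f : V → E)
    (hf0 : ∀ x ∈ D, f x = 0)
    (hharm : ∀ x ∉ D, (∑ y, (w x y : ℂ) • (f x - φ y x (f y))) = 0) :
    f = 0 := by
  obtain ⟨x₀, hx₀⟩ := Finite.exists_max fun x => ‖f x‖
  suffices h : ‖f x₀‖ = 0 by
    funext x
    exact norm_le_zero_iff.mp (h ▸ hx₀ x)
  by_contra hne
  have hstep : ∀ x y, (SimpleGraph.fromRel (fun x y => 0 < w x y)).Adj x y →
      ‖f x‖ = ‖f x₀‖ → ‖f y‖ = ‖f x₀‖ := by
    intro x y hadj hx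
    have hpos : 0 < w x y := by
      rcases ((SimpleGraph.fromRel_adj _ _ _).mp hadj).2 with h | h
      · exact h
      · rwa [hw_symm]
    have hxD : x ∉ D := fun hxD => hne (by rw [← hx, hf0 x hxD, norm_zero])
    rw [← hx]
    exact norm_eq_of_harmonic_of_isMax w hw_nonneg φ f x (fun z => hx ▸ hx₀ z) (hharm x hxD) y hpos
  obtain ⟨d, hd⟩ := hD
  obtain ⟨p⟩ := hconn.preconnected x₀ d
  have hwalk : ∀ {u v : V}, (SimpleGraph.fromRel (fun x y => 0 < w x y)).Walk u v →
      ‖f u‖ = ‖f x₀‖ → ‖f v‖ = ‖f x₀‖ := by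
    intro u v q
    induction q with
    | nil => exact id
    | cons hadj _ ih => exact fun hu => ih (hstep _ _ hadj hu)
  exact hne (by rw [← hwalk p rfl, hf0 d hd, norm_zero])
end

section
/- (Uniform contraction for averages of unitary operators with no common fixed vector.) Let E be a nonzero finite-dimensional complex inner product space, let n ≥ 0, and let U_0, U_1, …, U_n be unitary operators on E with U_0 = Id. Assume there is no nonzero vector v ∈ E with U_i v = v for all i = 0, …, n. Then for every c with 0 < c ≤ 1 there exists η > 0 such that for all real numbers p_0, …, p_n with c ≤ p_i ≤ c^{−1} for each i, and all v ∈ E, one has ‖∑_{i=0}^n p_i · U_i v‖ ≤ (1 − η) · (∑_{i=0}^n p_i) · ‖v‖. -/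
/-!
By strict convexity of the norm, a sum of vectors of norm `‖v‖`, two of which are distinct, has
norm strictly less than the number of vectors times `‖v‖`. Since `U 0 v = v`, the absence of a
common fixed vector makes this apply to the unweighted sum `T v = ∑ i, U i v` for each `v ≠ 0`
(`norm_sum_unitary_lt`). Compactness of the unit sphere turns this into
`‖T v‖ ≤ (n + 1 - δ) ‖v‖` for some `δ > 0` (`exists_norm_sum_unitary_le`).
Weights `p i ≥ c` are handled by splitting off `c • T`:
`∑ i, p i • U i v = c • T v + ∑ i, (p i - c) • U i v` has norm at most `(∑ i, p i - c δ) ‖v‖`, and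
the upper bound `p i ≤ c⁻¹` makes the gain `c δ` a definite proportion of `∑ i, p i`.
-/

theorem norm_sum_unitary_lt
    {E : Type*} [NormedAddCommGroup E] [InnerProductSpace ℂ E]
    (n : ℕ) (U : Fin (n + 1) → (E ≃ₗᵢ[ℂ] E))
    (hU0 : U 0 = LinearIsometryEquiv.refl ℂ E)
    (hfix : ∀ v : E, (∀ i, U i v = v) → v = 0) (v : E) (hv : v ≠ 0) :
    ‖∑ i, U i v‖ < (n + 1) * ‖v‖ := by
  obtain ⟨i, hi⟩ : ∃ i, U i v ≠ v := by
    by_contra! h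
    exact hv (hfix v h)
  have h0 : U 0 v = v := by simp [hU0]
  have hi0 : i ≠ 0 := by
    rintro rfl
    exact hi h0
  have hmem : i ∈ Finset.univ.erase (0 : Fin (n + 1)) := by simp [hi0]
  have : UniformConvexSpace E :=
    letI : InnerProductSpace ℝ E := InnerProductSpace.rclikeToReal ℂ E
    InnerProductSpace.toUniformConvexSpace
  have hlt : ‖v + U i v‖ < ‖v‖ + ‖U i v‖ := by
    rw [← not_sameRay_iff_norm_add_lt, sameRay_iff_of_norm_eq (by simp)]
    exact fun h => hi h.symm
  have hrest : ‖∑ j ∈ (Finset.univ.erase (0 : Fin (n + 1))).erase i, U j v‖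
      ≤ ∑ j ∈ (Finset.univ.erase (0 : Fin (n + 1))).erase i, ‖U j v‖ := norm_sum_le _ _
  have hcount : ∑ j, ‖U j v‖ = (n + 1) * ‖v‖ := by simp
  rw [← hcount, ← Finset.add_sum_erase _ _ (Finset.mem_univ 0), ← Finset.add_sum_erase _ _ hmem,
    ← Finset.add_sum_erase _ (fun j => ‖U j v‖) (Finset.mem_univ 0),
    ← Finset.add_sum_erase _ (fun j => ‖U j v‖) hmem, h0, ← add_assoc, ← add_assoc]
  exact (norm_add_le _ _).trans_lt (add_lt_add_of_lt_of_le hlt hrest)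

theorem exists_norm_sum_unitary_le
    {E : Type*} [NormedAddCommGroup E] [InnerProductSpace ℂ E]
    [FiniteDimensional ℂ E] [Nontrivial E]
    (n : ℕ) (U : Fin (n + 1) → (E ≃ₗᵢ[ℂ] E))
    (hU0 : U 0 = LinearIsometryEquiv.refl ℂ E)
    (hfix : ∀ v : E, (∀ i, U i v = v) → v = 0) :
    ∃ δ > 0, ∀ v : E, ‖∑ i, U i v‖ ≤ (n + 1 - δ) * ‖v‖ := by
  have : ProperSpace E := FiniteDimensional.proper ℂ E
  have hcont : Continuous fun v : E => ‖∑ i, U i v‖ :=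
    (continuous_finsetSum _ fun i _ => (U i).continuous).norm
  have hne : (Metric.sphere (0 : E) 1).Nonempty := by
    obtain ⟨x, hx⟩ := exists_ne (0 : E)
    exact ⟨((‖x‖⁻¹ : ℝ) : ℂ) • x, by simp [norm_smul, hx]⟩
  obtain ⟨w, hw, hmax⟩ := (isCompact_sphere (0 : E) 1).exists_isMaxOn hne hcont.continuousOn
  have hw1 : ‖w‖ = 1 := by simpa using hw
  have hwlt := norm_sum_unitary_lt n U hU0 hfix w (by rintro rfl; simp at hw1)
  rw [hw1, mul_one] at hwlt
  refine ⟨n + 1 - ‖∑ i, U i w‖, by linarith, fun v => ?_⟩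
  rw [sub_sub_cancel]
  by_cases hv : v = 0
  · simp [hv]
  have hpos : 0 < ‖v‖ := norm_pos_iff.mpr hv
  have h := hmax (show ((‖v‖⁻¹ : ℝ) : ℂ) • v ∈ Metric.sphere (0 : E) 1 by simp [norm_smul, hv])
  have hscale : ‖∑ i, U i (((‖v‖⁻¹ : ℝ) : ℂ) • v)‖ = ‖v‖⁻¹ * ‖∑ i, U i v‖ := by
    simp only [map_smul, ← Finset.smul_sum, norm_smul]
    simp
  simp only [Set.mem_ofPred_eq, hscale] at h
  rwa [inv_mul_le_iff₀ hpos, mul_comm] at h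

/-- **Uniform contraction for averages of unitary operators with no common fixed vector.**
Let `U_0 = Id, U_1, …, U_n` be unitary operators on a nonzero finite-dimensional complex
inner product space `E` with no common nonzero fixed vector. Then for every `0 < c ≤ 1`
there is `η > 0` such that for all weights `p_i ∈ [c, c⁻¹]` and all `v`,
`‖∑ i, p_i • U_i v‖ ≤ (1 − η) (∑ i, p_i) ‖v‖`. -/
theorem uniform_contraction_of_no_common_fixed_vector
    {E : Type*} [NormedAddCommGroup E] [InnerProductSpace ℂ E]
    [FiniteDimensional ℂ E] [Nontrivial E]
    (n : ℕ) (U : Fin (n + 1) → (E ≃ₗᵢ[ℂ] E))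
    (hU0 : U 0 = LinearIsometryEquiv.refl ℂ E)
    (hfix : ∀ v : E, (∀ i, U i v = v) → v = 0)
    (c : ℝ) (hc : 0 < c) (hc1 : c ≤ 1) :
    ∃ η > 0, ∀ p : Fin (n + 1) → ℝ,
      (∀ i, c ≤ p i) → (∀ i, p i ≤ c⁻¹) → ∀ v : E,
        ‖∑ i, p i • U i v‖ ≤ (1 - η) * (∑ i, p i) * ‖v‖ := by
  obtain ⟨δ, hδ, hT⟩ := exists_norm_sum_unitary_le n U hU0 hfix
  -- `η` is the gain `c * δ` divided by the largest possible total weight `(n + 1) * c⁻¹`.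
  refine ⟨c * δ / ((n + 1) * c⁻¹), by positivity, fun p hpc hpc' v => ?_⟩
  have hP : ∑ i, p i ≤ (n + 1) * c⁻¹ := by
    simpa using Finset.sum_le_sum fun i (_ : i ∈ Finset.univ) => hpc' i
  have hgain : c * δ / ((n + 1) * c⁻¹) * ∑ i, p i ≤ c * δ := by
    rw [div_mul_eq_mul_div, div_le_iff₀ (by positivity)]
    gcongr
  have hsplit : ∑ i, p i • U i v = c • ∑ i, U i v + ∑ i, (p i - c) • U i v := by
    simp [sub_smul, Finset.smul_sum]
  have h1 : ‖c • ∑ i, U i v‖ ≤ c * ((n + 1 - δ) * ‖v‖) := by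
    rw [norm_smul, Real.norm_of_nonneg hc.le]
    exact mul_le_mul_of_nonneg_left (hT v) hc.le
  have h2 : ‖∑ i, (p i - c) • U i v‖ ≤ (∑ i, p i - (n + 1) * c) * ‖v‖ := by
    refine (norm_sum_le _ _).trans_eq ?_
    have : ∀ i, ‖(p i - c) • U i v‖ = (p i - c) * ‖v‖ := fun i => by
      rw [norm_smul, Real.norm_of_nonneg (sub_nonneg.mpr (hpc i)), LinearIsometryEquiv.norm_map]
    simp [this, ← Finset.sum_mul]
  calc ‖∑ i, p i • U i v‖
      ≤ c * ((n + 1 - δ) * ‖v‖) + (∑ i, p i - (n + 1) * c) * ‖v‖ := by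
        rw [hsplit]
        exact (norm_add_le _ _).trans (add_le_add h1 h2)
    _ = (∑ i, p i - c * δ) * ‖v‖ := by ring
    _ ≤ (1 - c * δ / ((n + 1) * c⁻¹)) * (∑ i, p i) * ‖v‖ := by
        refine mul_le_mul_of_nonneg_right ?_ (norm_nonneg v)
        rw [sub_mul, one_mul]
        exact sub_le_sub_left hgain _
end

section
/- (Uniform Poisson tail bound.) There exists α > 0 such that for every real M with 0 < M ≤ 1/2 and every integer K ≥ 1, the Poisson tail satisfies ∑_{n=K}^{∞} e^{−M·K} · (M·K)^n / n! ≤ 2 · M^{α·K}. -/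
/-!
The proof is the Chernoff bound. Since `M ≤ 1`, each tail term satisfies
`(MK)^(K+n) / (K+n)! ≤ M^K * K^(K+n) / (K+n)!`, and summing against the exponential series of
`exp K` bounds the tail by `exp (-MK) * M^K * exp K = (M * exp (1 - M))^K`. With `α = 1/4` it
remains to see `M * exp (1 - M) ≤ M^α`, that is `1 - M + (3/4) * log M ≤ 0`, on `(0, 1/2]`
(`one_sub_add_log_nonpos`).
-/

/-- The tangent line of `log` at `1/2` suffices, because `(3/4) * log 2 > 1/2`. -/
lemma one_sub_add_log_nonpos {M : ℝ} (hM : 0 < M) (hM2 : M ≤ 1 / 2) :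
    1 - M + 3 / 4 * Real.log M ≤ 0 := by
  have h1 := Real.log_le_sub_one_of_pos (show 0 < 2 * M by linarith)
  rw [Real.log_mul (by norm_num) hM.ne'] at h1
  have h2 := Real.log_two_gt_d9
  linarith

/-- The Chernoff bound for the Poisson tail; the factor `2` of the final estimate is not needed. -/
lemma poisson_tail_le_chernoff {M : ℝ} (hM : 0 < M) (hM1 : M ≤ 1) (K : ℕ) :
    (∑' n : ℕ, Real.exp (-(M * K)) * (M * K) ^ (K + n) / (Nat.factorial (K + n)))
      ≤ Real.exp (-(M * K)) * M ^ K * Real.exp K := by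
  have hs : Summable fun n : ℕ => (K : ℝ) ^ n / (Nat.factorial n) :=
    Real.summable_pow_div_factorial K
  have hinj : Function.Injective fun n : ℕ => K + n := add_right_injective K
  have hs' : Summable fun n : ℕ => (K : ℝ) ^ (K + n) / (Nat.factorial (K + n)) :=
    hs.comp_injective hinj
  have hexp : ∑' n : ℕ, (K : ℝ) ^ (K + n) / (Nat.factorial (K + n)) ≤ Real.exp K := by
    rw [Real.exp_eq_exp_ℝ, NormedSpace.exp_eq_tsum_div]
    exact tsum_comp_le_tsum_of_inj hs (fun n => by positivity) hinj
  have hterm : ∀ n : ℕ, Real.exp (-(M * K)) * (M * K) ^ (K + n) / (Nat.factorial (K + n))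
      ≤ Real.exp (-(M * K)) * M ^ K * ((K : ℝ) ^ (K + n) / (Nat.factorial (K + n))) := by
    intro n
    rw [mul_pow, ← mul_assoc, mul_div_assoc]
    gcongr ?_ * _
    gcongr _ * ?_
    exact pow_le_pow_of_le_one hM.le hM1 (Nat.le_add_right K n)
  calc _ ≤ ∑' n : ℕ, Real.exp (-(M * K)) * M ^ K *
        ((K : ℝ) ^ (K + n) / (Nat.factorial (K + n))) :=
        (Summable.of_nonneg_of_le (fun n => by positivity) hterm (hs'.mul_left _)).tsum_le_tsum
          hterm (hs'.mul_left _)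
    _ ≤ _ := by
        rw [tsum_mul_left]
        gcongr

/-- **Uniform Poisson tail bound.** There is `α > 0` such that for every `0 < M ≤ 1/2` and
every integer `K ≥ 1`, `∑_{n=K}^∞ e^{−MK} (MK)^n / n! ≤ 2 M^{αK}`. -/
theorem uniform_poisson_tail_bound :
    ∃ α : ℝ, 0 < α ∧ ∀ M : ℝ, 0 < M → M ≤ 1 / 2 → ∀ K : ℕ, 1 ≤ K →
      (∑' n : ℕ, Real.exp (-(M * K)) * (M * K) ^ (K + n) / (Nat.factorial (K + n)))
        ≤ 2 * M ^ (α * K) := by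
  refine ⟨1 / 4, by norm_num, fun M hM hM2 K _ => ?_⟩
  have hpos : 0 < M ^ ((1 / 4 : ℝ) * K) := Real.rpow_pos_of_pos hM _
  suffices h : Real.exp (-(M * K)) * M ^ K * Real.exp K ≤ M ^ ((1 / 4 : ℝ) * K) by
    linarith [poisson_tail_le_chernoff hM (by linarith) K]
  rw [← Real.rpow_natCast M K, Real.rpow_def_of_pos hM, Real.rpow_def_of_pos hM,
    ← Real.exp_add, ← Real.exp_add, Real.exp_le_exp]
  have h := mul_nonpos_of_nonneg_of_nonpos (Nat.cast_nonneg (α := ℝ) K)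
    (one_sub_add_log_nonpos hM hM2)
  linarith
end

section
/- (Corner coefficient identity.) Let 0 < α < 2π and let s ∈ {−1, +1}. For each θ ∈ (0, α/2), the family indexed by k ∈ ℤ \ {0} of terms 1/(π(2αk)²) − 1/(π(2πk)²) + s·(1/(π(2θ+2αk)²) − 1/(π(2θ+2πk)²)) is absolutely summable; its sum, as a function of θ, is integrable on (0, α/2), and ∫_0^{α/2} ∑_{k∈ℤ\{0}} [ 1/(π(2αk)²) − 1/(π(2πk)²) + s·(1/(π(2θ+2αk)²) − 1/(π(2θ+2πk)²)) ] dθ = π/(24α) − α/(24π) + s·cot(α/2)/(4π). -/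
/-!
The summand equals `A / k² + B (1 / (θ + α k)² - 1 / (θ + π k)²)` with
`A = (1 / α² - 1 / π²) / (4π)` and `B = s / (4π)`, so only two sums over the nonzero integers matter.
The first is `∑ 1 / k² = π² / 3` (`hasSum_inv_sq`). The second is the lattice sum
`∑ 1 / (θ + a k)²` for `a = α` and `a = π`. On `[0, c]` with `c = α / 2 < a` it is dominated by
`∑ 1 / ((a - c)² k²)` (`inv_sq_le`), hence it is continuous there and may be integrated term by term.
Each term integrates to `1 / (a k) - 1 / (c + a k)`, and the Mittag-Leffler expansion of the cotangent
gives `∫₀ᶜ ∑ 1 / (θ + a k)² dθ = 1 / c - (π / a) cot (π c / a)` (`integral_latticeSum`).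

For `a = α` the cotangent is `cot (π / 2) = 0`, for `a = π` it is `cot (α / 2)`, and in the difference
of the two the terms `1 / c` cancel.
-/

open MeasureTheory Real

/-- The sum of `1 / (θ + a k)²` over the nonzero integers `k`. -/
noncomputable def latticeSum (a θ : ℝ) : ℝ := ∑' k : {k : ℤ // k ≠ 0}, 1 / (θ + a * k) ^ 2

lemma hasSum_inv_sq : HasSum (fun k : {k : ℤ // k ≠ 0} => 1 / ((k : ℤ) : ℝ) ^ 2) (π ^ 2 / 3) := by
  have h : HasSum (fun k : ℤ => 1 / (k : ℝ) ^ 2) (π ^ 2 / 3) := by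
    have := HasSum.of_nat_of_neg (f := fun k : ℤ => 1 / (k : ℝ) ^ 2)
      (g := π ^ 2 / 6) (g' := π ^ 2 / 6)
      (by simpa using hasSum_zeta_two) (by simpa using hasSum_zeta_two)
    rwa [show π ^ 2 / 6 + π ^ 2 / 6 - 1 / ((0 : ℤ) : ℝ) ^ 2 = π ^ 2 / 3 by norm_num; ring] at this
  refine (hasSum_subtype_iff_of_support_subset (s := {k : ℤ | k ≠ 0}) ?_).mpr h
  intro k hk
  contrapose! hk
  simp_all

lemma abs_add_mul_ge {a c θ : ℝ} (hca : c < a) (h0 : 0 ≤ θ) (hc : θ ≤ c) {k : ℤ} (hk : k ≠ 0) :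
    (a - c) * |(k : ℝ)| ≤ |θ + a * k| := by
  have h1 : (1 : ℝ) ≤ |(k : ℝ)| := by exact_mod_cast Int.one_le_abs hk
  have h2 : |a * (k : ℝ)| - |θ| ≤ |θ + a * k| := by
    have := abs_sub_abs_le_abs_sub (a * (k : ℝ)) (-θ)
    rw [abs_neg, sub_neg_eq_add, add_comm (a * (k : ℝ))] at this
    exact this
  rw [abs_mul, abs_of_pos (by linarith : 0 < a), abs_of_nonneg h0] at h2
  nlinarith

lemma add_mul_ne_zero {a c θ : ℝ} (hca : c < a) (h0 : 0 ≤ θ) (hc : θ ≤ c) {k : ℤ} (hk : k ≠ 0) :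
    θ + a * k ≠ 0 := by
  have h := abs_add_mul_ge hca h0 hc hk
  have h1 : 0 < |(k : ℝ)| := abs_pos.mpr (by exact_mod_cast hk)
  exact abs_pos.mp ((mul_pos (sub_pos.mpr hca) h1).trans_le h)

/-- A bound uniform in `θ ∈ [0, c]` and summable in `k`. -/
lemma inv_sq_le {a c θ : ℝ} (hca : c < a) (h0 : 0 ≤ θ) (hc : θ ≤ c) {k : ℤ} (hk : k ≠ 0) :
    ‖1 / (θ + a * k) ^ 2‖ ≤ 1 / (a - c) ^ 2 * (1 / (k : ℝ) ^ 2) := by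
  have h := abs_add_mul_ge hca h0 hc hk
  have h1 : 0 < |(k : ℝ)| := abs_pos.mpr (by exact_mod_cast hk)
  have h2 : 0 < (a - c) * |(k : ℝ)| := mul_pos (sub_pos.mpr hca) h1
  rw [Real.norm_of_nonneg (by positivity), ← sq_abs (θ + a * k), ← sq_abs (k : ℝ),
    one_div_mul_one_div, ← mul_pow]
  gcongr

lemma summable_latticeSum {a c θ : ℝ} (hca : c < a) (h0 : 0 ≤ θ) (hc : θ ≤ c) :
    Summable (fun k : {k : ℤ // k ≠ 0} => 1 / (θ + a * k) ^ 2) :=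
  Summable.of_norm_bounded (hasSum_inv_sq.summable.mul_left (1 / (a - c) ^ 2))
    fun k => inv_sq_le hca h0 hc k.2

lemma continuousOn_term {a c : ℝ} (hca : c < a) {k : ℤ} (hk : k ≠ 0) :
    ContinuousOn (fun θ : ℝ => 1 / (θ + a * k) ^ 2) (Set.Icc 0 c) := by
  refine ContinuousOn.div (by fun_prop) (by fun_prop) fun θ hθ => ?_
  exact pow_ne_zero _ (add_mul_ne_zero hca hθ.1 hθ.2 hk)

lemma continuousOn_latticeSum {a c : ℝ} (hca : c < a) :
    ContinuousOn (latticeSum a) (Set.Icc 0 c) :=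
  continuousOn_tsum (fun k => continuousOn_term hca k.2)
    (hasSum_inv_sq.summable.mul_left (1 / (a - c) ^ 2))
    fun k _ hθ => inv_sq_le hca hθ.1 hθ.2 k.2

lemma integral_term {a c : ℝ} (hc0 : 0 < c) (hca : c < a) {k : ℤ} (hk : k ≠ 0) :
    ∫ θ in Set.Ioo 0 c, 1 / (θ + a * k) ^ 2 = 1 / (a * k) - 1 / (c + a * k) := by
  rw [← integral_Ioc_eq_integral_Ioo, ← intervalIntegral.integral_of_le hc0.le]
  rw [intervalIntegral.integral_eq_sub_of_hasDerivAt (f := fun θ : ℝ => -(1 / (θ + a * k)))]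
  · simp only [zero_add]
    ring
  · intro θ hθ
    rw [Set.uIcc_of_le hc0.le] at hθ
    have hne := add_mul_ne_zero hca hθ.1 hθ.2 hk
    convert (((hasDerivAt_id θ).add_const (a * (k : ℝ))).inv hne).neg using 1
    · ext x
      simp
    · simp [neg_div]
  · exact ContinuousOn.intervalIntegrable (by
      rw [Set.uIcc_of_le hc0.le]
      exact continuousOn_term hca hk)

/-- Mittag-Leffler expansion of the cotangent on `(0, 1)`, in real form. -/
lemma hasSum_cot_real {x : ℝ} (hx0 : 0 < x) (hx1 : x < 1) :
    HasSum (fun n : ℕ => 1 / (x - (n + 1)) + 1 / (x + (n + 1))) (π * Real.cot (π * x) - 1 / x) := by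
  have hz : (x : ℂ) ∈ Complex.integerComplement := by
    rintro ⟨m, hm⟩
    have hm' : (m : ℝ) = x := by exact_mod_cast hm
    rw [← hm'] at hx0 hx1
    have h0 : (0 : ℤ) < m := by exact_mod_cast hx0
    have h1 : m < (1 : ℤ) := by exact_mod_cast hx1
    omega
  have h := (summable_cotTerm hz).hasSum
  have e : ∑' n, cotTerm (x : ℂ) n = π * Complex.cot (π * x) - 1 / x := (cot_series_rep' hz).symm
  rw [e] at h
  simp only [cotTerm] at h
  exact_mod_cast h

/-- Symmetric pairing of `k` and `-k` identifies the value of an absolutely convergent series. -/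
lemma hasSum_cot_int {x : ℝ} (hx0 : 0 < x) (hx1 : x < 1)
    (hs : Summable (fun k : {k : ℤ // k ≠ 0} => 1 / (k : ℝ) - 1 / (x + k))) :
    HasSum (fun k : {k : ℤ // k ≠ 0} => 1 / (k : ℝ) - 1 / (x + k))
      (1 / x - π * Real.cot (π * x)) := by
  set g : ℤ → ℝ := Set.indicator {k : ℤ | k ≠ 0} (fun k : ℤ => 1 / (k : ℝ) - 1 / (x + k)) with hg
  obtain ⟨S, hS⟩ := hs
  have hS' : HasSum g S := hasSum_subtype_iff_indicator.mp hS
  have hp := hS'.nat_add_neg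
  have hg0 : g 0 = 0 := by simp [hg]
  rw [← hasSum_nat_add_iff' 1] at hp
  have hc := (hasSum_cot_real hx0 hx1).neg
  have key : S = 1 / x - π * Real.cot (π * x) := by
    have := hp.unique (a₂ := -(π * Real.cot (π * x) - 1 / x)) (by
      convert hc using 2 with n
      have hn : ((n + 1 : ℕ) : ℤ) ≠ 0 := by omega
      have hn' : -((n + 1 : ℕ) : ℤ) ≠ 0 := by omega
      rw [hg, Set.indicator_of_mem (by exact hn), Set.indicator_of_mem (by exact hn')]
      push_cast
      rw [one_div_neg_eq_neg_one_div, ← sub_eq_add_neg x]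
      ring)
    simp [hg0] at this
    rw [this, one_div]
  exact key ▸ hS

lemma integral_latticeSum {a c : ℝ} (hc0 : 0 < c) (hca : c < a) :
    ∫ θ in Set.Ioo 0 c, latticeSum a θ = 1 / c - π / a * Real.cot (π * (c / a)) := by
  have ha : 0 < a := hc0.trans hca
  have hint : ∀ k : {k : ℤ // k ≠ 0},
      IntegrableOn (fun θ : ℝ => 1 / (θ + a * k) ^ 2) (Set.Ioo 0 c) := fun k =>
    ((continuousOn_term hca k.2).integrableOn_Icc).mono_set Set.Ioo_subset_Icc_self
  have h := hasSum_integral_of_summable_integral_norm hint (by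
    refine Summable.of_nonneg_of_le (fun k => integral_nonneg fun _ => norm_nonneg _) (fun k => ?_)
      (hasSum_inv_sq.summable.mul_left (c * (1 / (a - c) ^ 2)))
    calc ∫ θ in Set.Ioo 0 c, ‖1 / (θ + a * k) ^ 2‖
        ≤ ∫ θ in Set.Ioo 0 c, 1 / (a - c) ^ 2 * (1 / ((k : ℤ) : ℝ) ^ 2) := by
          refine setIntegral_mono_on (hint k).norm (integrableOn_const (by simp)) measurableSet_Ioo fun θ hθ => ?_
          exact inv_sq_le hca hθ.1.le hθ.2.le k.2
      _ = _ := by simp [hc0.le, mul_assoc])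
  have e : ∀ k : {k : ℤ // k ≠ 0}, ∫ θ in Set.Ioo 0 c, 1 / (θ + a * k) ^ 2
      = 1 / a * (1 / (k : ℝ) - 1 / (c / a + k)) := fun k => by
    have hne := add_mul_ne_zero hca hc0.le le_rfl k.2
    have hk : ((k : ℤ) : ℝ) ≠ 0 := by exact_mod_cast k.2
    have hne' : c / a + (k : ℤ) ≠ 0 := by
      intro h0
      apply hne
      field_simp at h0
      linarith
    rw [integral_term hc0 hca k.2, show c + a * ((k : ℤ) : ℝ) = a * (c / a + k) by field_simp]
    field_simp
  simp only [e] at h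
  have hs := hasSum_cot_int (div_pos hc0 ha) ((div_lt_one ha).mpr hca)
    ((summable_mul_left_iff (one_div_ne_zero ha.ne')).mp h.summable)
  have := h.unique (hs.mul_left (1 / a))
  unfold latticeSum
  rw [this]
  field_simp

/-- **Corner coefficient identity.** For `0 < α < 2π` and a sign `s = ±1`, the family over
`k ∈ ℤ \ {0}` of terms
`1/(π(2αk)²) − 1/(π(2πk)²) + s (1/(π(2θ+2αk)²) − 1/(π(2θ+2πk)²))`
is absolutely summable for each `θ ∈ (0, α/2)`, its sum is integrable in `θ` on `(0, α/2)`,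
and the integral equals `π/(24α) − α/(24π) + s cot(α/2)/(4π)`. -/
theorem corner_coefficient_identity
    (α : ℝ) (hα0 : 0 < α) (hα2 : α < 2 * π)
    (s : ℝ) (hs : s = 1 ∨ s = -1) :
    (∀ θ ∈ Set.Ioo (0 : ℝ) (α / 2),
      Summable (fun k : {k : ℤ // k ≠ 0} =>
        |1 / (π * (2 * α * k) ^ 2) - 1 / (π * (2 * π * k) ^ 2)
          + s * (1 / (π * (2 * θ + 2 * α * k) ^ 2) - 1 / (π * (2 * θ + 2 * π * k) ^ 2))|)) ∧
    IntegrableOn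
      (fun θ : ℝ => ∑' k : {k : ℤ // k ≠ 0},
        (1 / (π * (2 * α * k) ^ 2) - 1 / (π * (2 * π * k) ^ 2)
          + s * (1 / (π * (2 * θ + 2 * α * k) ^ 2) - 1 / (π * (2 * θ + 2 * π * k) ^ 2))))
      (Set.Ioo (0 : ℝ) (α / 2)) ∧
    (∫ θ in Set.Ioo (0 : ℝ) (α / 2),
        ∑' k : {k : ℤ // k ≠ 0},
          (1 / (π * (2 * α * k) ^ 2) - 1 / (π * (2 * π * k) ^ 2)
            + s * (1 / (π * (2 * θ + 2 * α * k) ^ 2) - 1 / (π * (2 * θ + 2 * π * k) ^ 2))))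
      = π / (24 * α) - α / (24 * π) + s * Real.cot (α / 2) / (4 * π) := by
  have hπ := Real.pi_pos
  have hc0 : 0 < α / 2 := by linarith
  have hc1 : α / 2 < α := by linarith
  have hc2 : α / 2 < π := by linarith
  have e : ∀ (θ : ℝ) (k : {k : ℤ // k ≠ 0}),
      1 / (π * (2 * α * k) ^ 2) - 1 / (π * (2 * π * k) ^ 2)
        + s * (1 / (π * (2 * θ + 2 * α * k) ^ 2) - 1 / (π * (2 * θ + 2 * π * k) ^ 2))
      = 1 / (4 * π) * (1 / α ^ 2 - 1 / π ^ 2) * (1 / ((k : ℤ) : ℝ) ^ 2)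
        + s / (4 * π) * (1 / (θ + α * k) ^ 2 - 1 / (θ + π * k) ^ 2) := fun θ k => by
    rw [show 2 * θ + 2 * α * ((k : ℤ) : ℝ) = 2 * (θ + α * k) by ring,
      show 2 * θ + 2 * π * ((k : ℤ) : ℝ) = 2 * (θ + π * k) by ring]
    simp only [mul_pow, mul_inv, div_eq_mul_inv]
    ring
  simp only [e]
  have hsum : ∀ θ ∈ Set.Ioo (0 : ℝ) (α / 2), HasSum (fun k : {k : ℤ // k ≠ 0} =>
      1 / (4 * π) * (1 / α ^ 2 - 1 / π ^ 2) * (1 / ((k : ℤ) : ℝ) ^ 2)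
        + s / (4 * π) * (1 / (θ + α * k) ^ 2 - 1 / (θ + π * k) ^ 2))
      (1 / (4 * π) * (1 / α ^ 2 - 1 / π ^ 2) * (π ^ 2 / 3)
        + s / (4 * π) * (latticeSum α θ - latticeSum π θ)) := fun θ hθ =>
    (hasSum_inv_sq.mul_left _).add
      (((summable_latticeSum hc1 hθ.1.le hθ.2.le).hasSum.sub
        (summable_latticeSum hc2 hθ.1.le hθ.2.le).hasSum).mul_left _)
  have hi : ∀ a, α / 2 < a → IntegrableOn (latticeSum a) (Set.Ioo 0 (α / 2)) := fun a ha =>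
    ((continuousOn_latticeSum ha).integrableOn_Icc).mono_set Set.Ioo_subset_Icc_self
  have hconst : IntegrableOn (fun _ : ℝ => 1 / (4 * π) * (1 / α ^ 2 - 1 / π ^ 2) * (π ^ 2 / 3))
      (Set.Ioo 0 (α / 2)) := integrableOn_const (by simp)
  have hdiff : IntegrableOn (fun θ => s / (4 * π) * (latticeSum α θ - latticeSum π θ))
      (Set.Ioo 0 (α / 2)) := ((hi α hc1).sub (hi π hc2)).const_mul (s / (4 * π))
  refine ⟨fun θ hθ => (hsum θ hθ).summable.abs, ?_, ?_⟩
  · exact (integrableOn_congr_fun (fun θ hθ => (hsum θ hθ).tsum_eq) measurableSet_Ioo).mpr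
      (hconst.add hdiff)
  · rw [setIntegral_congr_fun measurableSet_Ioo (fun θ hθ => (hsum θ hθ).tsum_eq),
      integral_add hconst hdiff, integral_const_mul (s / (4 * π)), integral_sub (hi α hc1) (hi π hc2),
      integral_latticeSum hc0 hc1, integral_latticeSum hc0 hc2,
      show π * (α / 2 / α) = π / 2 by field_simp, show π * (α / 2 / π) = α / 2 by field_simp,
      Real.cot_eq_cos_div_sin (π / 2), Real.cos_pi_div_two]
    simp only [integral_const, MeasurableSet.univ, measureReal_restrict_apply, Set.univ_inter,
      Real.volume_real_Ioo_of_le hc0.le, smul_eq_mul]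
    field_simp
    ring
end
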